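/- arXiv:math/0205091 — 2 statements merged into one kernel-verified Lean document; each statement's English description precedes it below -/
import Mathlib

section
/- Let n ≥ 5, j ∈ ZMod n, and 0 ≤ k ≤ n−3. The finset of chords P(j,k) := {{j+1, j+1+t} : k+2 ≤ t ≤ n−2} ∪ {{j+2, j+2+t} : 2 ≤ t ≤ k+1} in ZMod n consists of valid chords (each pair has distinct, non-adjacent endpoints), is pairwise non-crossing, and has cardinality exactly n − 3. (Hence every vertex of the paper's path C in the pants graph of the n-punctured sphere is a genuine pants decomposition with 3·0−3+n = n−3 curves.) -/
/-!
`P n j k` is a union of two fans of chords, with adjacent apexes `p = j + 1` and `p + 1`. Two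
chords of one fan share its apex, so they do not cross. A chord `{p, p + t}` of the first fan and
a chord `{p + 1, p + 1 + u}` of the second satisfy `u + 1 ≤ t`, so both endpoints of the latter lie
on the arc from `p` to `p + t`. That this excludes a crossing whichever chord comes first, and
however endpoints are ordered, is the symmetry of separation in a circular order: `{a, b}` and
`{c, d}` cross exactly when they can be labelled so that `a, c, b, d` are in cyclic order.
-/

/-- `c` lies strictly between `a` and `b` (going counterclockwise from `a` to `b`)
on the circle of gaps `ZMod n`. -/
def GapBtw (n : ℕ) (a b c : ZMod n) : Prop :=
  0 < (c - a).val ∧ (c - a).val < (b - a).val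

/-- The ordered pair `(a, b)` spans a chord: the gaps `a` and `b` are distinct and
non-adjacent, i.e. `(b - a).val ∉ {0, 1, n - 1}`. -/
def IsChordPair (n : ℕ) (a b : ZMod n) : Prop :=
  (b - a).val ∉ ({0, 1, n - 1} : Set ℕ)

/-- The unordered pair `s` is a chord of `ZMod n`: it is of the form `{a, b}` with
`a`, `b` distinct non-adjacent gaps. -/
def IsChord (n : ℕ) (s : Finset (ZMod n)) : Prop :=
  ∃ a b : ZMod n, s = {a, b} ∧ IsChordPair n a b

/-- The ordered chords `(a,b)` and `(c,d)` cross: they share no endpoint and exactly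
one of `c`, `d` lies strictly between `a` and `b`. -/
def CrossOrd (n : ℕ) (a b c d : ZMod n) : Prop :=
  a ≠ c ∧ a ≠ d ∧ b ≠ c ∧ b ≠ d ∧ Xor' (GapBtw n a b c) (GapBtw n a b d)

/-- The unordered chords `s` and `t` cross. -/
def Crosses (n : ℕ) (s t : Finset (ZMod n)) : Prop :=
  ∃ a b c d : ZMod n, s = {a, b} ∧ t = {c, d} ∧ CrossOrd n a b c d

/-- The pants decomposition `P(j,k)`, the vertex `P_{j(n-3)+k}` of the paper's closed
path `C` in the pants graph of the `n`-punctured sphere: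
`P(j,k) = {{j+1, j+1+t} : k+2 ≤ t ≤ n-2} ∪ {{j+2, j+2+t} : 2 ≤ t ≤ k+1}`. -/
def P (n : ℕ) (j : ZMod n) (k : ℕ) : Finset (Finset (ZMod n)) :=
  ((Finset.Icc (k + 2) (n - 2)).image fun t : ℕ => ({j + 1, j + 1 + (t : ZMod n)} : Finset (ZMod n)))
    ∪ ((Finset.Icc 2 (k + 1)).image fun t : ℕ => ({j + 2, j + 2 + (t : ZMod n)} : Finset (ZMod n)))

lemma finset_pair_eq_pair_iff {α : Type*} [DecidableEq α] {a b c d : α} :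
    ({a, b} : Finset α) = {c, d} ↔ a = c ∧ b = d ∨ a = d ∧ b = c := by
  rw [← Finset.coe_inj, Finset.coe_pair, Finset.coe_pair, Set.pair_eq_pair_iff]

section CircularOrder

variable {α : Type*} {a b c d : α}

lemma sbtw_and_sbtw_exchange [CircularPreorder α] (hacb : sbtw a c b) (hbda : sbtw b d a) :
    sbtw c b d ∧ sbtw d a c :=
  ⟨(hbda.trans_right hacb.cyclic_right).cyclic_right,
    (hacb.trans_right hbda.cyclic_right).cyclic_right⟩

lemma sbtw_of_not_sbtw [CircularOrder α] (hab : a ≠ b) (hbc : b ≠ c) (hca : c ≠ a)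
    (h : ¬ sbtw a b c) : sbtw c b a := by
  refine sbtw_iff_not_btw.2 fun habc => ?_
  rcases habc.antisymm (btw_iff_not_sbtw.2 h) with rfl | rfl | rfl
  exacts [hab rfl, hbc rfl, hca rfl]

end CircularOrder

section Crossing

variable {n : ℕ} {a b c d : ZMod n}

lemma zmod_val_sub [NeZero n] (a b : ZMod n) :
    (a - b).val = if b.val ≤ a.val then a.val - b.val else n + a.val - b.val := by
  split_ifs with h
  · exact ZMod.val_sub h
  · obtain ⟨m, rfl⟩ := Nat.exists_eq_succ_of_ne_zero (NeZero.ne n)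
    exact Fin.coe_sub_iff_lt.2 (not_le.1 h)

lemma zmod_sbtw_iff_val [NeZero n] :
    sbtw a b c ↔ a.val < b.val ∧ b.val < c.val ∨ b.val < c.val ∧ c.val < a.val ∨
      c.val < a.val ∧ a.val < b.val := by
  obtain ⟨m, rfl⟩ := Nat.exists_eq_succ_of_ne_zero (NeZero.ne n)
  exact Fin.sbtw_iff

lemma gapBtw_iff_sbtw [NeZero n] : GapBtw n a b c ↔ sbtw a c b := by
  have ha := a.val_lt
  have hb := b.val_lt
  have hc := c.val_lt
  rw [GapBtw, zmod_val_sub, zmod_val_sub, zmod_sbtw_iff_val]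
  split_ifs <;> omega

lemma crossOrd_iff_sbtw [NeZero n] :
    CrossOrd n a b c d ↔ sbtw a c b ∧ sbtw b d a ∨ sbtw a d b ∧ sbtw b c a := by
  simp only [CrossOrd, gapBtw_iff_sbtw]
  constructor
  · rintro ⟨hac, had, hbc, hbd, ⟨hacb, hadb⟩ | ⟨hadb, hacb⟩⟩
    · have hab : a ≠ b := by rintro rfl; exact sbtw_irrefl_left_right hacb
      exact .inl ⟨hacb, sbtw_of_not_sbtw had hbd.symm hab.symm hadb⟩
    · have hab : a ≠ b := by rintro rfl; exact sbtw_irrefl_left_right hadb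
      exact .inr ⟨hadb, sbtw_of_not_sbtw hac hbc.symm hab.symm hacb⟩
  · intro h
    have hxor : Xor (sbtw a c b) (sbtw a d b) :=
      h.imp (fun ⟨hacb, hbda⟩ => ⟨hacb, hbda.not_sbtw⟩) fun ⟨hadb, hbca⟩ => ⟨hadb, hbca.not_sbtw⟩
    refine ⟨?_, ?_, ?_, ?_, hxor⟩ <;> rintro rfl <;>
      simp [sbtw_irrefl_left, sbtw_irrefl_right] at h

lemma CrossOrd.symm [NeZero n] (h : CrossOrd n a b c d) : CrossOrd n c d a b := by
  rw [crossOrd_iff_sbtw] at h ⊢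
  rcases h with ⟨hacb, hbda⟩ | ⟨hadb, hbca⟩
  · exact .inr (sbtw_and_sbtw_exchange hacb hbda)
  · exact .inl (sbtw_and_sbtw_exchange hadb hbca).symm

lemma Crosses.symm [NeZero n] {s t : Finset (ZMod n)} (h : Crosses n s t) : Crosses n t s := by
  obtain ⟨a, b, c, d, hs, ht, hcross⟩ := h
  exact ⟨c, d, a, b, ht, hs, hcross.symm⟩

lemma crosses_pair_iff [NeZero n] : Crosses n {a, b} {c, d} ↔ CrossOrd n a b c d := by
  refine ⟨?_, fun h => ⟨a, b, c, d, rfl, rfl, h⟩⟩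
  rintro ⟨a', b', c', d', hs, ht, hcross⟩
  rw [crossOrd_iff_sbtw] at hcross ⊢
  rcases finset_pair_eq_pair_iff.1 hs with ⟨rfl, rfl⟩ | ⟨rfl, rfl⟩ <;>
    rcases finset_pair_eq_pair_iff.1 ht with ⟨rfl, rfl⟩ | ⟨rfl, rfl⟩ <;> tauto

lemma Crosses.disjoint {s t : Finset (ZMod n)} (h : Crosses n s t) : Disjoint s t := by
  obtain ⟨a, b, c, d, rfl, rfl, hac, had, hbc, hbd, -⟩ := h
  simp [hac.symm, had.symm, hbc.symm, hbd.symm]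

lemma not_crossOrd_of_val_sub_le [NeZero n] (hc : (c - a).val ≤ (b - a).val)
    (hd : (d - a).val ≤ (b - a).val) : ¬ CrossOrd n a b c d := by
  rintro ⟨hac, had, hbc, hbd, hxor⟩
  have gapBtw_of_le {x : ZMod n} (hax : a ≠ x) (hbx : b ≠ x)
      (hx : (x - a).val ≤ (b - a).val) : GapBtw n a b x :=
    ⟨ZMod.val_pos.2 (sub_ne_zero.2 hax.symm), hx.lt_of_ne fun h =>
      hbx (sub_left_injective (ZMod.val_injective n h)).symm⟩
  exact (xor_iff_iff_not.1 hxor).1 (gapBtw_of_le hac hbc hc) (gapBtw_of_le had hbd hd)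

end Crossing

lemma val_add_natCast_sub_self {n : ℕ} (p : ZMod n) {m : ℕ} (hm : m < n) :
    (p + (m : ZMod n) - p).val = m := by
  rw [add_sub_cancel_left, ZMod.val_natCast_of_lt hm]

lemma ne_add_natCast_of_pos_of_lt {n : ℕ} (p : ZMod n) {m : ℕ} (hm : 0 < m) (hmn : m < n) :
    p ≠ p + (m : ZMod n) := by
  rw [ne_eq, left_eq_add, ZMod.natCast_eq_zero_iff]
  exact Nat.not_dvd_of_pos_of_lt hm hmn

/-- The fan with apex `p`: the pairs `{p, p + t}` with `t ∈ I`. The far endpoint is recorded by its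
counterclockwise distance `t` from `p`, a natural number meant to be less than `n`. -/
def fan (n : ℕ) (p : ZMod n) (I : Finset ℕ) : Finset (Finset (ZMod n)) :=
  I.image fun t : ℕ => {p, p + (t : ZMod n)}

section Fan

variable {n : ℕ} {p : ZMod n} {I J : Finset ℕ} {s t : Finset (ZMod n)}

lemma mem_fan : s ∈ fan n p I ↔ ∃ x ∈ I, {p, p + (x : ZMod n)} = s :=
  Finset.mem_image

lemma apex_mem_of_mem_fan (hs : s ∈ fan n p I) : p ∈ s := by
  obtain ⟨x, -, rfl⟩ := mem_fan.1 hs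
  exact Finset.mem_insert_self ..

lemma isChord_of_mem_fan (hI : ∀ x ∈ I, 2 ≤ x ∧ x + 2 ≤ n) (hs : s ∈ fan n p I) :
    IsChord n s := by
  obtain ⟨x, hx, rfl⟩ := mem_fan.1 hs
  obtain ⟨h2x, hxn⟩ := hI x hx
  have hval : (p + (x : ZMod n) - p).val = x := val_add_natCast_sub_self p (by omega)
  refine ⟨p, p + x, rfl, ?_⟩
  rw [IsChordPair, hval, Set.mem_insert_iff, Set.mem_insert_iff, Set.mem_singleton_iff]
  omega

lemma not_crosses_of_mem_fan (hs : s ∈ fan n p I) (ht : t ∈ fan n p I) : ¬ Crosses n s t :=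
  fun h => Finset.disjoint_left.1 h.disjoint (apex_mem_of_mem_fan hs) (apex_mem_of_mem_fan ht)

lemma card_fan (hI : ∀ x ∈ I, x < n) : (fan n p I).card = I.card := by
  refine Finset.card_image_of_injOn fun x hx y hy h => ?_
  have hadd : p + (x : ZMod n) = p + (y : ZMod n) := by
    rcases finset_pair_eq_pair_iff.1 h with ⟨-, hxy⟩ | ⟨hpy, hxp⟩
    · exact hxy
    · exact hxp.trans hpy
  exact CharP.natCast_injOn_Iio (ZMod n) n (hI x hx) (hI y hy) (add_left_cancel hadd)

lemma not_crosses_of_mem_fan_of_mem_fan_add_one (hI : ∀ x ∈ I, x < n)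
    (hJI : ∀ x ∈ I, ∀ y ∈ J, y < x) (hs : s ∈ fan n p I) (ht : t ∈ fan n (p + 1) J) :
    ¬ Crosses n s t := by
  obtain ⟨x, hx, rfl⟩ := mem_fan.1 hs
  obtain ⟨y, hy, rfl⟩ := mem_fan.1 ht
  have hxn := hI x hx
  have hyx := hJI x hx y hy
  have : NeZero n := ⟨by omega⟩
  have hb : (p + (x : ZMod n) - p).val = x := val_add_natCast_sub_self p hxn
  have hc : (p + 1 - p).val = 1 := by
    rw [← Nat.cast_one, val_add_natCast_sub_self p (by omega)]
  have hd : (p + 1 + (y : ZMod n) - p).val = y + 1 := by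
    rw [add_assoc, add_comm 1, ← Nat.cast_succ, val_add_natCast_sub_self p (by omega)]
  rw [crosses_pair_iff]
  apply not_crossOrd_of_val_sub_le <;> omega

lemma disjoint_fan_fan_add_one (hJ : ∀ y ∈ J, y + 1 < n) :
    Disjoint (fan n p I) (fan n (p + 1) J) := by
  refine Finset.disjoint_left.2 fun s hsI hsJ => ?_
  have hp := apex_mem_of_mem_fan hsI
  obtain ⟨y, hy, rfl⟩ := mem_fan.1 hsJ
  have hyn := hJ y hy
  rw [Finset.mem_insert, Finset.mem_singleton] at hp
  rcases hp with hp | hp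
  · exact ne_add_natCast_of_pos_of_lt p one_pos (by omega) (by simpa using hp)
  · exact ne_add_natCast_of_pos_of_lt p y.succ_pos hyn
      (by rwa [Nat.cast_succ, add_comm (y : ZMod n), ← add_assoc])

lemma card_fan_union_fan_add_one (hI : ∀ x ∈ I, x < n) (hJ : ∀ y ∈ J, y + 1 < n) :
    (fan n p I ∪ fan n (p + 1) J).card = I.card + J.card := by
  rw [Finset.card_union_of_disjoint (disjoint_fan_fan_add_one hJ), card_fan hI,
    card_fan fun y hy => (Nat.lt_succ_self y).trans (hJ y hy)]

end Fan

lemma P_eq_fan_union_fan (n : ℕ) (j : ZMod n) (k : ℕ) :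
    P n j k = fan n (j + 1) (Finset.Icc (k + 2) (n - 2)) ∪
      fan n (j + 1 + 1) (Finset.Icc 2 (k + 1)) := by
  rw [add_assoc, one_add_one_eq_two]
  rfl

/-- Each `P(j,k)` (for `n ≥ 5`, `k ≤ n - 3`) consists of valid chords, is pairwise
non-crossing, and has cardinality exactly `n - 3`. -/
theorem P_isPantsDecomposition (n : ℕ) (hn : 5 ≤ n) (j : ZMod n) (k : ℕ) (hk : k ≤ n - 3) :
    (∀ s ∈ P n j k, IsChord n s) ∧
    (∀ s ∈ P n j k, ∀ t ∈ P n j k, ¬ Crosses n s t) ∧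
    (P n j k).card = n - 3 := by
  have : NeZero n := ⟨by omega⟩
  have hI : ∀ x ∈ Finset.Icc (k + 2) (n - 2), 2 ≤ x ∧ x + 2 ≤ n := by grind
  have hJ : ∀ y ∈ Finset.Icc 2 (k + 1), 2 ≤ y ∧ y + 2 ≤ n := by grind
  have hIn : ∀ x ∈ Finset.Icc (k + 2) (n - 2), x < n := by grind
  have hJn : ∀ y ∈ Finset.Icc 2 (k + 1), y + 1 < n := by grind
  have hJI : ∀ x ∈ Finset.Icc (k + 2) (n - 2), ∀ y ∈ Finset.Icc 2 (k + 1), y < x := by grind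
  simp only [P_eq_fan_union_fan, Finset.mem_union]
  refine ⟨?_, ?_, ?_⟩
  · rintro s (hs | hs)
    exacts [isChord_of_mem_fan hI hs, isChord_of_mem_fan hJ hs]
  · rintro s (hs | hs) t (ht | ht)
    · exact not_crosses_of_mem_fan hs ht
    · exact not_crosses_of_mem_fan_of_mem_fan_add_one hIn hJI hs ht
    · exact fun h => not_crosses_of_mem_fan_of_mem_fan_add_one hIn hJI ht hs h.symm
    · exact not_crosses_of_mem_fan hs ht
  · rw [card_fan_union_fan_add_one hIn hJn, Nat.card_Icc, Nat.card_Icc]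
    omega
end

section
/- Let n ≥ 5 and let {a,b} and {c,d} be chords of ZMod n sharing no endpoint. Then {a,b} and {c,d} cross if and only if all four of the puncture sets D(a,b) ∩ D(c,d), D(a,b) \ D(c,d), D(c,d) \ D(a,b), and (D(a,b) ∪ D(c,d))ᶜ are nonempty; equivalently, the chords do not cross if and only if the puncture sets they cut off are nested or disjoint (after possibly replacing one by its complement). This identifies the combinatorial crossing relation with the separation pattern of punctures by the curves β_{a,b} and β_{c,d} on the n-punctured sphere. -/
/-- The set of punctures cut off on one side of the chord `{i, j}` (puncture `p` lies
between gap `p` and gap `p+1`): `D(i,j) = {p : (p - i).val < (j - i).val}`. -/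
def D (n : ℕ) (i j : ZMod n) : Set (ZMod n) :=
  {p : ZMod n | (p - i).val < (j - i).val}

/-- Two subsets of a set *cross*, in the sense of the theory of cross-free families, when they and
their complements meet in all four ways. This is the separation pattern of two curves that
intersect essentially. -/
def SetsCross {α : Type*} (S T : Set α) : Prop :=
  (S ∩ T).Nonempty ∧ (S \ T).Nonempty ∧ (T \ S).Nonempty ∧ ((S ∪ T)ᶜ).Nonempty

namespace SetsCross

variable {α β : Type*} {S T : Set α}

lemma comm : SetsCross S T ↔ SetsCross T S := by
  simp only [SetsCross, Set.inter_comm S T, Set.union_comm S T, and_left_comm]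

lemma compl_right_iff : SetsCross S Tᶜ ↔ SetsCross S T := by
  have h₁ : Tᶜ \ S = (S ∪ T)ᶜ := by rw [Set.sdiff_eq, Set.compl_union, Set.inter_comm]
  have h₂ : (S ∪ Tᶜ)ᶜ = T \ S := by
    rw [Set.compl_union, compl_compl, Set.sdiff_eq, Set.inter_comm]
  rw [SetsCross, SetsCross, Set.sdiff_compl, ← Set.sdiff_eq, h₁, h₂]
  tauto

lemma preimage_Iio_Ico_iff [LinearOrder β] (f : α → β) {a b c d : α}
    (ha : ∀ x, f a ≤ f x) :
    SetsCross (f ⁻¹' Set.Iio (f b)) (f ⁻¹' Set.Ico (f c) (f d)) ↔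
      f a < f c ∧ f c < f b ∧ f b < f d := by
  constructor
  · rintro ⟨⟨x, hxb, hcx, -⟩, ⟨y, hyb, hy⟩, ⟨z, ⟨-, hzd⟩, hbz⟩, -⟩
    have hcb : f c < f b := hcx.trans_lt hxb
    have hbd : f b < f d := (not_lt.mp hbz).trans_lt hzd
    have hyc : f y < f c := lt_of_not_ge fun hcy ↦ hy ⟨hcy, hyb.trans hbd⟩
    exact ⟨(ha y).trans_lt hyc, hcb, hbd⟩
  · rintro ⟨hac, hcb, hbd⟩
    exact ⟨⟨c, hcb, le_rfl, hcb.trans hbd⟩, ⟨a, hac.trans hcb, fun h ↦ hac.not_ge h.1⟩,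
      ⟨b, ⟨hcb.le, hbd⟩, lt_irrefl _⟩,
      ⟨d, fun h ↦ h.elim hbd.not_gt fun h ↦ lt_irrefl _ h.2⟩⟩

end SetsCross

lemma not_setsCross_iff {α : Type*} {S T : Set α} :
    ¬ SetsCross S T ↔ S ∩ T = ∅ ∨ S ⊆ T ∨ T ⊆ S ∨ S ∪ T = Set.univ := by
  simp only [SetsCross, not_and_or, Set.not_nonempty_iff_eq_empty, Set.sdiff_eq_empty,
    Set.compl_empty_iff]

section Arcs

variable {n : ℕ} [NeZero n]

lemma val_sub_of_val_lt {x y : ZMod n} (h : x.val < y.val) :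
    (x - y).val = x.val + n - y.val := by
  have hne : y - x ≠ 0 := sub_ne_zero.mpr fun hyx ↦ h.ne (congrArg ZMod.val hyx.symm)
  rw [← neg_sub, ZMod.neg_val, if_neg hne, ZMod.val_sub h.le]
  have := ZMod.val_lt y
  omega

lemma val_sub_left_inj (o : ZMod n) {x y : ZMod n} : (x - o).val = (y - o).val ↔ x = y :=
  (ZMod.val_injective n).eq_iff.trans sub_left_inj

lemma compl_D {i j : ZMod n} (hij : i ≠ j) : (D n i j)ᶜ = D n j i := by
  ext p
  simp only [D, Set.mem_compl_iff, Set.mem_ofPred_eq, not_lt]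
  have hji : (i - j).val = n - (j - i).val := by
    rw [← neg_sub, ZMod.neg_val, if_neg (sub_ne_zero.mpr hij.symm)]
  have hpj : p - j = (p - i) - (j - i) := (sub_sub_sub_cancel_right p j i).symm
  have hp := ZMod.val_lt (p - i)
  rw [hji, hpj]
  rcases le_or_gt (j - i).val (p - i).val with h | h
  · rw [ZMod.val_sub h]
    omega
  · rw [val_sub_of_val_lt h]
    omega

lemma D_eq_preimage_Ico {o i j : ZMod n} (h : (i - o).val ≤ (j - o).val) :
    D n i j = (fun p ↦ (p - o).val) ⁻¹' Set.Ico (i - o).val (j - o).val := by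
  ext p
  have hj := ZMod.val_lt (j - o)
  simp only [D, Set.mem_ofPred_eq, Set.mem_preimage, Set.mem_Ico]
  rw [← sub_sub_sub_cancel_right p i o, ← sub_sub_sub_cancel_right j i o, ZMod.val_sub h]
  rcases le_or_gt (i - o).val (p - o).val with hp | hp
  · rw [ZMod.val_sub hp]
    omega
  · rw [val_sub_of_val_lt hp]
    omega

lemma setsCross_D_swap_right {S : Set (ZMod n)} (i j : ZMod n) :
    SetsCross S (D n j i) ↔ SetsCross S (D n i j) := by
  rcases eq_or_ne i j with rfl | hij
  · rfl
  · rw [← compl_D hij, SetsCross.compl_right_iff]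

lemma setsCross_D_swap_left {T : Set (ZMod n)} (i j : ZMod n) :
    SetsCross (D n j i) T ↔ SetsCross (D n i j) T := by
  rw [SetsCross.comm, setsCross_D_swap_right, SetsCross.comm]

lemma setsCross_D_iff_of_val_le {a b c d : ZMod n} (h : (c - a).val ≤ (d - a).val) :
    SetsCross (D n a b) (D n c d) ↔
      0 < (c - a).val ∧ (c - a).val < (b - a).val ∧ (b - a).val < (d - a).val := by
  have ha : ∀ x, (a - a).val ≤ (x - a).val := by simp
  rw [D_eq_preimage_Ico h]
  simpa only [sub_self, ZMod.val_zero] using!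
    SetsCross.preimage_Iio_Ico_iff (fun p ↦ (p - a).val) (b := b) (c := c) (d := d) ha

end Arcs

section Crossing

variable {n : ℕ}

lemma crossOrd_swap_right {a b c d : ZMod n} : CrossOrd n a b d c ↔ CrossOrd n a b c d := by
  constructor <;> exact fun ⟨h₁, h₂, h₃, h₄, hx⟩ ↦ ⟨h₂, h₁, h₄, h₃, Or.symm hx⟩

variable [NeZero n]

lemma crossOrd_iff_of_val_le {a b c d : ZMod n} (h : (c - a).val ≤ (d - a).val) :
    CrossOrd n a b c d ↔
      0 < (c - a).val ∧ (c - a).val < (b - a).val ∧ (b - a).val < (d - a).val := by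
  have ha : (a - a).val = 0 := by simp
  constructor
  · rintro ⟨hac, -, -, hbd, ⟨hc, hd⟩ | ⟨hd, hc⟩⟩ <;>
      simp only [GapBtw, ne_eq, ← val_sub_left_inj a, ha] at hac hbd hc hd <;> omega
  · rintro ⟨hac, hcb, hbd⟩
    simp only [CrossOrd, GapBtw, ne_eq, ← val_sub_left_inj a, ha]
    exact ⟨by omega, by omega, by omega, by omega, Or.inl ⟨⟨hac, hcb⟩, by omega⟩⟩

lemma crossOrd_iff_setsCross {a b c d : ZMod n} :
    CrossOrd n a b c d ↔ SetsCross (D n a b) (D n c d) := by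
  rcases le_total (c - a).val (d - a).val with h | h
  · rw [crossOrd_iff_of_val_le h, setsCross_D_iff_of_val_le h]
  · rw [← crossOrd_swap_right, ← setsCross_D_swap_right, crossOrd_iff_of_val_le h,
      setsCross_D_iff_of_val_le h]

lemma crosses_iff_setsCross {a b c d : ZMod n} :
    Crosses n {a, b} {c, d} ↔ SetsCross (D n a b) (D n c d) := by
  constructor
  · rintro ⟨a', b', c', d', hab, hcd, h⟩
    rw [crossOrd_iff_setsCross] at h
    rw [← Finset.coe_inj, Finset.coe_pair, Finset.coe_pair, Set.pair_eq_pair_iff] at hab hcd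
    rcases hab with ⟨rfl, rfl⟩ | ⟨rfl, rfl⟩ <;> rcases hcd with ⟨rfl, rfl⟩ | ⟨rfl, rfl⟩ <;>
      simpa only [setsCross_D_swap_left a b, setsCross_D_swap_right c d] using h
  · exact fun h ↦ ⟨a, b, c, d, rfl, rfl, crossOrd_iff_setsCross.mpr h⟩

theorem crossing_iff_regions_general (a b c d : ZMod n) :
    (Crosses n {a, b} {c, d} ↔
      (D n a b ∩ D n c d).Nonempty ∧ (D n a b \ D n c d).Nonempty ∧
      (D n c d \ D n a b).Nonempty ∧ ((D n a b ∪ D n c d)ᶜ).Nonempty) ∧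
    (¬ Crosses n {a, b} {c, d} ↔
      (D n a b ∩ D n c d = ∅ ∨ D n a b ⊆ D n c d ∨ D n c d ⊆ D n a b ∨
        D n a b ∪ D n c d = Set.univ)) :=
  ⟨crosses_iff_setsCross, crosses_iff_setsCross.not.trans not_setsCross_iff⟩

end Crossing

/-- Two chords sharing no endpoint cross iff all four puncture regions
`D(a,b) ∩ D(c,d)`, `D(a,b) \ D(c,d)`, `D(c,d) \ D(a,b)` and `(D(a,b) ∪ D(c,d))ᶜ`
are nonempty; equivalently, they do not cross iff the puncture sets they cut off are
nested or disjoint (after possibly replacing one by its complement). -/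
theorem crossing_iff_regions (n : ℕ) (hn : 5 ≤ n) (a b c d : ZMod n)
    (hab : IsChordPair n a b) (hcd : IsChordPair n c d)
    (hac : a ≠ c) (had : a ≠ d) (hbc : b ≠ c) (hbd : b ≠ d) :
    (Crosses n {a, b} {c, d} ↔
      (D n a b ∩ D n c d).Nonempty ∧ (D n a b \ D n c d).Nonempty ∧
      (D n c d \ D n a b).Nonempty ∧ ((D n a b ∪ D n c d)ᶜ).Nonempty) ∧
    (¬ Crosses n {a, b} {c, d} ↔
      (D n a b ∩ D n c d = ∅ ∨ D n a b ⊆ D n c d ∨ D n c d ⊆ D n a b ∨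
        D n a b ∪ D n c d = Set.univ)) := by
  have : NeZero n := ⟨by omega⟩
  exact crossing_iff_regions_general a b c d
end
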